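/- Let σ ≥ √3/2. Then there is no function s : ℝ → ℝ that is twice continuously differentiable on [0,∞), satisfies s''(t) = 2 s(t)³ − t s(t) for all t ≥ 0, and has s(0) = 0 and s'(0) = σ. (Every such solution experiences blow-up in finite positive time.) -/

import Mathlib

open Set

/-!
The energy `s'² - s⁴ + t s²` is nondecreasing along solutions. Feeding this into the second
derivative of the excess `w = 2s² - t` and completing the square yields `w'' ≥ 4E₀ - (4/3)t²`, where
`E₀` is the initial energy. Integrating twice from `s(0) = 0`, `s'(0) = σ` shows that `w` and `w'`
are both positive at time `3/(4σ²)` as soon as `32σ⁶ > 3`. From then on `w'' ≥ 2w²`, and a positive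
increasing function with this property cannot exist for all time.
-/

section Comparison

variable {D : Set ℝ} {f f' g g' : ℝ → ℝ}

theorem monotoneOn_of_forall_hasDerivWithinAt_nonneg (hD : Convex ℝ D)
    (hf : ∀ x ∈ D, HasDerivWithinAt f (f' x) D x) (hf' : ∀ x ∈ interior D, 0 ≤ f' x) :
    MonotoneOn f D :=
  monotoneOn_of_hasDerivWithinAt_nonneg hD (fun x hx ↦ (hf x hx).continuousWithinAt)
    (fun x hx ↦ (hf x (interior_subset hx)).mono interior_subset) hf'

theorem sub_le_sub_of_hasDerivWithinAt_le (hD : Convex ℝ D)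
    (hf : ∀ x ∈ D, HasDerivWithinAt f (f' x) D x) (hg : ∀ x ∈ D, HasDerivWithinAt g (g' x) D x)
    (hle : ∀ x ∈ interior D, f' x ≤ g' x) {x y : ℝ} (hx : x ∈ D) (hy : y ∈ D) (hxy : x ≤ y) :
    f y - f x ≤ g y - g x := by
  have hmono : MonotoneOn (g - f) D :=
    monotoneOn_of_forall_hasDerivWithinAt_nonneg hD (fun t ht ↦ (hg t ht).sub (hf t ht))
      fun t ht ↦ sub_nonneg.2 (hle t ht)
  have h := hmono hx hy hxy
  simp only [Pi.sub_apply] at h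
  linarith

end Comparison

section BlowUp

variable {w w' w'' : ℝ → ℝ} {a : ℝ}

theorem not_forall_rpow_le_deriv {k q : ℝ} (hk : 0 < k) (hq : 1 < q)
    (hw : ∀ t ∈ Ici a, HasDerivWithinAt w (w' t) (Ici a) t) (hpos : ∀ t ∈ Ici a, 0 < w t) :
    ¬ ∀ t ∈ Ici a, k * w t ^ q ≤ w' t := by
  intro hle
  have hrate : 0 < (q - 1) * k := mul_pos (sub_pos.2 hq) hk
  have hderiv : ∀ t ∈ Ici a, w' t * (1 - q) * w t ^ (1 - q - 1) ≤ -((q - 1) * k) * 1 := by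
    intro t ht
    have hcancel : w t ^ q * w t ^ (1 - q - 1) = 1 := by
      rw [← Real.rpow_add (hpos t ht), show q + (1 - q - 1) = 0 by ring, Real.rpow_zero]
    calc w' t * (1 - q) * w t ^ (1 - q - 1)
        = -((q - 1) * (w' t * w t ^ (1 - q - 1))) := by ring
      _ ≤ -((q - 1) * (k * w t ^ q * w t ^ (1 - q - 1))) := by
          have := (hpos t ht).le
          have := sub_nonneg.2 hq.le
          gcongr
          exact hle t ht
      _ = -((q - 1) * k) * 1 := by rw [mul_assoc k, hcancel]; ring
  have hdecay : ∀ t ∈ Ici a, w t ^ (1 - q) - w a ^ (1 - q)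
      ≤ -((q - 1) * k) * t - -((q - 1) * k) * a := fun t ht ↦
    sub_le_sub_of_hasDerivWithinAt_le (f := fun t ↦ w t ^ (1 - q)) (convex_Ici a)
      (fun t ht ↦ (hw t ht).rpow_const (.inl (hpos t ht).ne'))
      (fun t _ ↦ (hasDerivWithinAt_id t _).const_mul _)
      (fun t ht ↦ hderiv t (interior_subset ht)) self_mem_Ici ht ht
  set T : ℝ := a + w a ^ (1 - q) / ((q - 1) * k) with hT
  have hTa : T ∈ Ici a :=
    le_add_of_nonneg_right (div_pos (Real.rpow_pos_of_pos (hpos a self_mem_Ici) _) hrate).le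
  have hTdecay : (q - 1) * k * (T - a) = w a ^ (1 - q) := by
    rw [hT, add_sub_cancel_left, mul_div_cancel₀ _ hrate.ne']
  linarith [hdecay T hTa, Real.rpow_pos_of_pos (hpos T hTa) (1 - q)]

theorem pos_of_second_deriv_nonneg_of_nonneg
    (hw : ∀ t ∈ Ici a, HasDerivWithinAt w (w' t) (Ici a) t)
    (hw' : ∀ t ∈ Ici a, HasDerivWithinAt w' (w'' t) (Ici a) t)
    (hw'' : ∀ t ∈ Ici a, 0 ≤ w t → 0 ≤ w'' t) (ha : 0 < w a) (ha' : 0 ≤ w' a) :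
    ∀ t ∈ Ici a, 0 < w t := by
  by_contra! ⟨b, hab, hb⟩
  have hcont : ContinuousOn w (Icc a b) := fun t ht ↦
    (hw t ht.1).continuousWithinAt.mono Icc_subset_Ici_self
  have hcompact : IsCompact (Icc a b ∩ w ⁻¹' Iic 0) :=
    isCompact_Icc.of_isClosed_subset
      (hcont.preimage_isClosed_of_isClosed isClosed_Icc isClosed_Iic) inter_subset_left
  obtain ⟨m, ⟨⟨ham, hmb⟩, hm⟩, hleast⟩ := hcompact.exists_isLeast ⟨b, ⟨hab, le_rfl⟩, hb⟩
  have hpos : ∀ t ∈ interior (Icc a m), 0 < w t := by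
    rw [interior_Icc]
    intro t ht
    by_contra! hneg
    exact ht.2.not_ge (hleast ⟨⟨ht.1.le, ht.2.le.trans hmb⟩, hneg⟩)
  have hmono' : MonotoneOn w' (Icc a m) :=
    monotoneOn_of_forall_hasDerivWithinAt_nonneg (convex_Icc a m)
      (fun t ht ↦ (hw' t ht.1).mono Icc_subset_Ici_self)
      fun t ht ↦ hw'' t (interior_subset ht).1 (hpos t ht).le
  have hmono : MonotoneOn w (Icc a m) :=
    monotoneOn_of_forall_hasDerivWithinAt_nonneg (convex_Icc a m)
      (fun t ht ↦ (hw t ht.1).mono Icc_subset_Ici_self) fun t ht ↦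
        ha'.trans (hmono' (left_mem_Icc.2 ham) (interior_subset ht) (interior_subset ht).1)
  exact (ha.trans_le (hmono (left_mem_Icc.2 ham) (right_mem_Icc.2 ham) ham)).not_ge hm

theorem mul_rpow_le_sq_deriv {κ p : ℝ}
    (hw : ∀ t ∈ Ici a, HasDerivWithinAt w (w' t) (Ici a) t)
    (hw' : ∀ t ∈ Ici a, HasDerivWithinAt w' (w'' t) (Ici a) t)
    (hpos : ∀ t ∈ Ici a, 0 < w t) (hpos' : ∀ t ∈ Ici a, 0 ≤ w' t)
    (hle : ∀ t ∈ Ici a, κ * (p + 1) / 2 * w t ^ p ≤ w'' t)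
    (ha : κ * w a ^ (p + 1) ≤ w' a ^ 2) :
    ∀ t ∈ Ici a, κ * w t ^ (p + 1) ≤ w' t ^ 2 := by
  have hmono : MonotoneOn (fun t ↦ w' t ^ 2 - κ * w t ^ (p + 1)) (Ici a) := by
    refine monotoneOn_of_forall_hasDerivWithinAt_nonneg
      (f' := fun t ↦ 2 * w' t * (w'' t - κ * (p + 1) / 2 * w t ^ p)) (convex_Ici a)
      (fun t ht ↦ ?_) fun t ht ↦ ?_
    · refine (((hw' t ht).pow 2).sub
        (((hw t ht).rpow_const (.inl (hpos t ht).ne')).const_mul κ)).congr_deriv ?_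
      rw [add_sub_cancel_right]
      push_cast
      ring
    · have ht := interior_subset ht
      exact mul_nonneg (mul_nonneg zero_le_two (hpos' t ht)) (sub_nonneg.2 (hle t ht))
  intro t ht
  exact sub_nonneg.1 ((sub_nonneg.2 ha).trans (hmono self_mem_Ici ht ht))

theorem not_forall_rpow_le_second_deriv {c p : ℝ} (hc : 0 < c) (hp : 1 < p)
    (hw : ∀ t ∈ Ici a, HasDerivWithinAt w (w' t) (Ici a) t)
    (hw' : ∀ t ∈ Ici a, HasDerivWithinAt w' (w'' t) (Ici a) t) (ha : 0 < w a) (ha' : 0 < w' a) :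
    ¬ ∀ t ∈ Ici a, 0 ≤ w t → c * w t ^ p ≤ w'' t := by
  intro hle
  have hw'' : ∀ t ∈ Ici a, 0 ≤ w t → 0 ≤ w'' t := fun t ht h ↦
    (mul_nonneg hc.le (Real.rpow_nonneg h p)).trans (hle t ht h)
  have hpos : ∀ t ∈ Ici a, 0 < w t :=
    pos_of_second_deriv_nonneg_of_nonneg hw hw' hw'' ha ha'.le
  have hmono' : MonotoneOn w' (Ici a) :=
    monotoneOn_of_forall_hasDerivWithinAt_nonneg (convex_Ici a) hw' fun t ht ↦
      hw'' t (interior_subset ht) (hpos t (interior_subset ht)).le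
  have hpos' : ∀ t ∈ Ici a, 0 ≤ w' t := fun t ht ↦ ha'.le.trans (hmono' self_mem_Ici ht ht)
  have hpow : 0 < w a ^ (p + 1) := Real.rpow_pos_of_pos ha _
  obtain ⟨κ, hκ, hκa, hκc⟩ :
      ∃ κ > 0, κ ≤ w' a ^ 2 / w a ^ (p + 1) ∧ κ ≤ 2 * c / (p + 1) :=
    ⟨_, lt_min (by positivity) (by positivity), min_le_left _ _, min_le_right _ _⟩
  have hκc' : κ * (p + 1) / 2 ≤ c := by
    rw [le_div_iff₀ (by positivity)] at hκc
    linarith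
  have hsq : ∀ t ∈ Ici a, κ * w t ^ (p + 1) ≤ w' t ^ 2 :=
    mul_rpow_le_sq_deriv hw hw' hpos hpos'
      (fun t ht ↦ (mul_le_mul_of_nonneg_right hκc' (Real.rpow_nonneg (hpos t ht).le p)).trans
        (hle t ht (hpos t ht).le))
      ((le_div_iff₀ hpow).1 hκa)
  refine not_forall_rpow_le_deriv (Real.sqrt_pos.2 hκ) (q := (p + 1) / 2) (by linarith) hw hpos
    fun t ht ↦ le_of_sq_le_sq ?_ (hpos' t ht)
  rw [mul_pow, Real.sq_sqrt hκ.le, ← Real.rpow_mul_natCast (hpos t ht).le, Nat.cast_ofNat,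
    div_mul_cancel₀ _ two_ne_zero]
  exact hsq t ht

end BlowUp

/-- `s` is a solution on `[0, ∞)` of the time-reversed homogeneous second Painlevé equation
`s'' = 2s³ - ts` with velocity `s' = v`. Derivatives are taken within `[0, ∞)`, so they are
one-sided at `0`. -/
structure IsPainleveIINegSolution (s v : ℝ → ℝ) : Prop where
  hasDerivWithinAt : ∀ t ∈ Ici 0, HasDerivWithinAt s (v t) (Ici 0) t
  hasDerivWithinAt_velocity :
    ∀ t ∈ Ici 0, HasDerivWithinAt v (2 * s t ^ 3 - t * s t) (Ici 0) t

namespace IsPainleveIINegSolution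

/-- Twice the Hamiltonian of the equation `s'' = 2s³ - ts`, for position `s` and velocity `v`. -/
def energy (s v : ℝ → ℝ) (t : ℝ) : ℝ := v t ^ 2 - s t ^ 4 + t * s t ^ 2

/-- The excess of `2s²` over `t`. As `s'' = s (2s² - t)`, it is positive exactly where the equation
pushes a nonzero solution away from `0`. -/
def excess (s : ℝ → ℝ) (t : ℝ) : ℝ := 2 * s t ^ 2 - t

variable {s v : ℝ → ℝ}

theorem monotoneOn_energy (h : IsPainleveIINegSolution s v) : MonotoneOn (energy s v) (Ici 0) := by
  refine monotoneOn_of_forall_hasDerivWithinAt_nonneg (f' := fun t ↦ s t ^ 2) (convex_Ici 0)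
    (fun t ht ↦ ?_) fun t _ ↦ sq_nonneg (s t)
  have hs := h.hasDerivWithinAt t ht
  refine ((((h.hasDerivWithinAt_velocity t ht).pow 2).sub (hs.pow 4)).add
    ((hasDerivWithinAt_id t _).mul (hs.pow 2))).congr_deriv ?_
  simp only [id_eq, Pi.pow_apply]
  push_cast
  ring

theorem hasDerivWithinAt_excess (h : IsPainleveIINegSolution s v) :
    ∀ t ∈ Ici 0, HasDerivWithinAt (excess s) (4 * s t * v t - 1) (Ici 0) t := fun t ht ↦
  ((((h.hasDerivWithinAt t ht).pow 2).const_mul 2).sub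
    (hasDerivWithinAt_id t _)).congr_deriv (by push_cast; ring)

theorem hasDerivWithinAt_deriv_excess (h : IsPainleveIINegSolution s v) :
    ∀ t ∈ Ici 0, HasDerivWithinAt (fun t ↦ 4 * s t * v t - 1)
      (4 * v t ^ 2 + 4 * s t ^ 2 * excess s t) (Ici 0) t := fun t ht ↦
  ((((h.hasDerivWithinAt t ht).const_mul 4).mul
    (h.hasDerivWithinAt_velocity t ht)).sub_const 1).congr_deriv (by rw [excess]; ring)

theorem le_second_deriv_excess (h : IsPainleveIINegSolution s v) {t : ℝ} (ht : t ∈ Ici 0) :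
    4 * energy s v 0 - 4 / 3 * t ^ 2 ≤ 4 * v t ^ 2 + 4 * s t ^ 2 * excess s t := by
  calc 4 * energy s v 0 - 4 / 3 * t ^ 2
      ≤ 4 * energy s v t - 4 / 3 * t ^ 2 + 4 / 3 * (3 * s t ^ 2 - t) ^ 2 := by
        linarith [h.monotoneOn_energy self_mem_Ici ht ht, sq_nonneg (3 * s t ^ 2 - t)]
    _ = 4 * v t ^ 2 + 4 * s t ^ 2 * excess s t := by rw [energy, excess]; ring

theorem le_deriv_excess (h : IsPainleveIINegSolution s v) {t : ℝ} (ht : t ∈ Ici 0) :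
    4 * s 0 * v 0 - 1 + 4 * energy s v 0 * t - 4 / 9 * t ^ 3 ≤ 4 * s t * v t - 1 := by
  have hpoly : ∀ t ∈ Ici (0 : ℝ), HasDerivWithinAt
      (fun t ↦ 4 * energy s v 0 * t - 4 / 9 * t ^ 3) (4 * energy s v 0 - 4 / 3 * t ^ 2)
      (Ici 0) t := fun t _ ↦
    (((hasDerivAt_id t).const_mul _).sub
      ((hasDerivAt_pow 3 t).const_mul _)).hasDerivWithinAt.congr_deriv (by push_cast; ring)
  have hcomp := sub_le_sub_of_hasDerivWithinAt_le (convex_Ici 0) hpoly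
    h.hasDerivWithinAt_deriv_excess (fun t ht ↦ h.le_second_deriv_excess (interior_subset ht))
    self_mem_Ici ht ht
  linarith

theorem le_excess (h : IsPainleveIINegSolution s v) {t : ℝ} (ht : t ∈ Ici 0) :
    2 * s 0 ^ 2 + (4 * s 0 * v 0 - 1) * t + 2 * energy s v 0 * t ^ 2 - 1 / 9 * t ^ 4
      ≤ excess s t := by
  have hpoly : ∀ t ∈ Ici (0 : ℝ), HasDerivWithinAt
      (fun t ↦ (4 * s 0 * v 0 - 1) * t + 2 * energy s v 0 * t ^ 2 - 1 / 9 * t ^ 4)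
      (4 * s 0 * v 0 - 1 + 4 * energy s v 0 * t - 4 / 9 * t ^ 3) (Ici 0) t := fun t _ ↦
    ((((hasDerivAt_id t).const_mul _).add ((hasDerivAt_pow 2 t).const_mul _)).sub
      ((hasDerivAt_pow 4 t).const_mul _)).hasDerivWithinAt.congr_deriv (by push_cast; ring)
  have hcomp := sub_le_sub_of_hasDerivWithinAt_le (convex_Ici 0) hpoly
    h.hasDerivWithinAt_excess (fun t ht ↦ h.le_deriv_excess (interior_subset ht))
    self_mem_Ici ht ht
  have hzero : excess s 0 = 2 * s 0 ^ 2 := sub_zero _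
  linarith

theorem two_mul_excess_sq_le {t : ℝ} (ht : 0 ≤ t) (hexcess : 0 ≤ excess s t) :
    2 * excess s t ^ 2 ≤ 4 * v t ^ 2 + 4 * s t ^ 2 * excess s t := by
  calc 2 * excess s t ^ 2
      ≤ 4 * v t ^ 2 + 2 * excess s t ^ 2 + 2 * (t * excess s t) := by
        linarith [sq_nonneg (v t), mul_nonneg ht hexcess]
    _ = 4 * v t ^ 2 + 4 * s t ^ 2 * excess s t := by rw [excess]; ring

theorem deriv_excess_nonpos_of_excess_pos (h : IsPainleveIINegSolution s v) {t : ℝ}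
    (ht : t ∈ Ici 0) (hexcess : 0 < excess s t) : 4 * s t * v t - 1 ≤ 0 := by
  by_contra! hderiv
  have hsub : Ici t ⊆ Ici 0 := Ici_subset_Ici.2 ht
  refine not_forall_rpow_le_second_deriv two_pos one_lt_two
    (fun u hu ↦ (h.hasDerivWithinAt_excess u (hsub hu)).mono hsub)
    (fun u hu ↦ (h.hasDerivWithinAt_deriv_excess u (hsub hu)).mono hsub) hexcess hderiv
    fun u hu hpos ↦ ?_
  rw [Real.rpow_two]
  exact two_mul_excess_sq_le (hsub hu) hpos

end IsPainleveIINegSolution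

open IsPainleveIINegSolution in
theorem painleveIIneg_no_global_solution_general {σ : ℝ} (hσ : 3 < 32 * σ ^ 6) :
    ¬ ∃ s v : ℝ → ℝ, IsPainleveIINegSolution s v ∧ s 0 = 0 ∧ v 0 = σ := by
  rintro ⟨s, v, h, hs, hv⟩
  have henergy : energy s v 0 = σ ^ 2 := by simp [energy, hs, hv]
  have hσ0 : σ ≠ 0 := by rintro rfl; norm_num at hσ
  have hsmall : 3 / (32 * σ ^ 6) < 1 := (div_lt_one (by positivity)).2 hσ
  -- The lower bound on `excess s t` is positive iff `1 / t + t ^ 2 / 9 < 2 * σ ^ 2`. The left side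
  -- has its minimum at `t ^ 3 = 9 / 2`, which is this `T` when `32 * σ ^ 6 = 3`.
  set T : ℝ := 3 / (4 * σ ^ 2) with hT
  have hTpos : 0 < T := by positivity
  have hexcess : 0 < excess s T := by
    refine lt_of_lt_of_le ?_ (h.le_excess hTpos.le)
    have hfactor : 2 * s 0 ^ 2 + (4 * s 0 * v 0 - 1) * T + 2 * energy s v 0 * T ^ 2 - 1 / 9 * T ^ 4
        = T / 2 * (1 - 3 / (32 * σ ^ 6)) := by
      rw [hs, henergy, hT]; field_simp; ring
    rw [hfactor]
    exact mul_pos (half_pos hTpos) (sub_pos.2 hsmall)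
  have hderiv : 0 < 4 * s T * v T - 1 := by
    refine lt_of_lt_of_le ?_ (h.le_deriv_excess hTpos.le)
    have hfactor : 4 * s 0 * v 0 - 1 + 4 * energy s v 0 * T - 4 / 9 * T ^ 3
        = 2 * (1 - 3 / (32 * σ ^ 6)) := by
      rw [hs, henergy, hT]; field_simp; ring
    rw [hfactor]
    exact mul_pos two_pos (sub_pos.2 hsmall)
  exact hderiv.not_ge (h.deriv_excess_nonpos_of_excess_pos hTpos.le hexcess)

/-- If `σ ≥ √3/2` then there is no global solution on `[0,∞)` of `s'' = 2s³ − ts`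
with `s(0) = 0` and `s'(0) = σ`: every such solution blows up in finite time. -/
theorem painleveIIneg_no_global_solution (σ : ℝ) (hσ : Real.sqrt 3 / 2 ≤ σ) :
    ¬ ∃ s s' s'' : ℝ → ℝ,
      (∀ t ∈ Ici (0:ℝ), HasDerivWithinAt s (s' t) (Ici 0) t) ∧
      (∀ t ∈ Ici (0:ℝ), HasDerivWithinAt s' (s'' t) (Ici 0) t) ∧
      ContinuousOn s'' (Ici 0) ∧
      s 0 = 0 ∧ s' 0 = σ ∧
      (∀ t ∈ Ici (0:ℝ), s'' t = 2 * s t ^ 3 - t * s t) := by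
  rintro ⟨s, s', s'', hs, hs', -, h0, h0', heq⟩
  have hσ6 : 3 < 32 * σ ^ 6 := by
    calc (3 : ℝ) < 32 * ((√3 ^ 2) ^ 3 / 2 ^ 6) := by norm_num
      _ = 32 * (√3 / 2) ^ 6 := by ring
      _ ≤ 32 * σ ^ 6 := by gcongr
  exact painleveIIneg_no_global_solution_general hσ6
    ⟨s, s', ⟨hs, fun t ht ↦ heq t ht ▸ hs' t ht⟩, h0, h0'⟩
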